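/- In the finite discriminative clustering setup, let f : [0,∞) → ℝ be convex with f(1) = 0, suppose L = lim_{t→∞} f(t)/t exists in ℝ, and suppose f(0) + L > 0. If the one-vs-one f-divergence GEMINI attains its upper bound, i.e. ∑_{a=1}^K ∑_{b=1}^K π(a)·π(b)·D_f(q_a‖q_b) = (f(0)+L) · ∑_{k=1}^K π(k)·(1−π(k)), then the cluster-conditional distributions have pairwise disjoint supports: for all a ≠ b and all x ∈ X, c(x,a)·c(x,b) = 0. -/

import Mathlib

open Finset

lemma convex_aux {f : ℝ → ℝ} (hf : ConvexOn ℝ (Set.Ici 0) f) {x y : ℝ} (hx : x ∈ Set.Ici (0 : ℝ))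
    (hy : y ∈ Set.Ici (0 : ℝ)) {a b : ℝ} (ha : 0 ≤ a) (hb : 0 ≤ b) (h : a + b = 1) :
    f (a • x + b • y) ≤ a • f x + b • f y := hf.2 hx hy ha hb h

lemma fdiv_le_aux (f : ℝ → ℝ) (hf : ConvexOn ℝ (Set.Ici 0) f) (L : ℝ)
    (hL : Filter.Tendsto (fun t => f t / t) Filter.atTop (nhds L)) (t : ℝ) (ht : 0 ≤ t) :
    f t ≤ f 0 + L * t := by
  have h1 : Filter.Tendsto (fun s : ℝ => (1 - t * s⁻¹) * f 0 + t * (f s / s)) Filter.atTop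
      (nhds ((1 - t * 0) * f 0 + t * L)) :=
    ((tendsto_const_nhds.sub (tendsto_inv_atTop_zero.const_mul t)).mul_const _).add
      (hL.const_mul t)
  have h2 : f t ≤ (1 - t * 0) * f 0 + t * L := by
    refine ge_of_tendsto h1 ?_
    filter_upwards [Filter.eventually_ge_atTop t, Filter.eventually_gt_atTop 0] with s hs hs0
    have h3 : t * s⁻¹ ≤ 1 := by
      rw [← div_eq_mul_inv, div_le_one hs0]; exact hs
    have h4 : 0 ≤ t * s⁻¹ := by positivity
    have := convex_aux hf (x := 0) (y := s) (by simp) (by simpa using hs0.le)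
      (a := 1 - t * s⁻¹) (b := t * s⁻¹) (by linarith) h4 (by ring)
    simp only [smul_eq_mul] at this
    have e : (1 - t * s⁻¹) * 0 + t * s⁻¹ * s = t := by field_simp; ring
    rw [e] at this
    calc f t ≤ _ := this
      _ = _ := by ring
  linarith

lemma fdiv_lt_aux (f : ℝ → ℝ) (hf : ConvexOn ℝ (Set.Ici 0) f) (hf1 : f 1 = 0) (L : ℝ)
    (hL : Filter.Tendsto (fun t => f t / t) Filter.atTop (nhds L)) (hfL : 0 < f 0 + L)
    (t : ℝ) (ht : 0 < t) :
    f t < f 0 + L * t := by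
  rcases le_or_gt t 1 with h | h
  · have := convex_aux hf (x := 0) (y := 1) (by simp) (by simp)
      (a := 1 - t) (b := t) (by linarith) ht.le (by ring)
    simp only [smul_eq_mul, hf1] at this
    have e : (1 - t) * 0 + t * 1 = t := by ring
    rw [e] at this
    nlinarith [mul_pos ht hfL]
  · have h2 := fdiv_le_aux f hf L hL (2 * t) (by linarith)
    have hd : 0 < 2 * t - 1 := by linarith
    have hd0 : 2 * t - 1 ≠ 0 := hd.ne'
    have := convex_aux hf (x := 1) (y := 2 * t) (by simp) (by simp; linarith)
      (a := t / (2 * t - 1)) (b := (t - 1) / (2 * t - 1)) (by positivity)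
      (div_nonneg (by linarith) hd.le) (by rw [← add_div, div_eq_iff hd0]; ring)
    simp only [smul_eq_mul, hf1] at this
    have e : t / (2 * t - 1) * 1 + (t - 1) / (2 * t - 1) * (2 * t) = t := by
      rw [mul_one, div_mul_eq_mul_div, ← add_div, div_eq_iff hd0]; ring
    rw [e] at this
    have h5 : (2 * t - 1) * f t ≤ (t - 1) * f (2 * t) := by
      have := mul_le_mul_of_nonneg_left this hd.le
      have e2 : (2 * t - 1) * (t / (2 * t - 1) * 0 + (t - 1) / (2 * t - 1) * f (2 * t))
        = (t - 1) * f (2 * t) := by field_simp; ring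
      linarith
    have h6 : (t - 1) * f (2 * t) ≤ (t - 1) * (f 0 + L * (2 * t)) :=
      mul_le_mul_of_nonneg_left h2 (by linarith)
    have h7 := mul_pos ht hfL
    refine lt_of_mul_lt_mul_left (a := 2 * t - 1) ?_ hd.le
    nlinarith

/-- In the finite discriminative clustering setup, for convex
`f : [0,∞) → ℝ` with `f(1) = 0`, `L = lim_{t→∞} f(t)/t ∈ ℝ`, and `f(0)+L > 0`,
if the one-vs-one f-divergence GEMINI attains its upper bound
`(f(0)+L)·∑ₖ π(k)(1−π(k))`, then the cluster-conditional distributions have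
pairwise disjoint supports. -/
theorem gemini_ovo_fdiv_tight_implies_disjoint
    {X : Type*} [Fintype X] [Nonempty X]
    (p : X → ℝ) (hp : ∀ x, 0 < p x) (hp1 : ∑ x, p x = 1)
    (K : ℕ) (hK : 0 < K)
    (c : X → Fin K → ℝ) (hc : ∀ x k, 0 ≤ c x k) (hc1 : ∀ x, ∑ k, c x k = 1)
    (pr : Fin K → ℝ) (hpr : ∀ k, pr k = ∑ x, p x * c x k) (hprpos : ∀ k, 0 < pr k)
    (q : Fin K → X → ℝ) (hq : ∀ k x, q k x = p x * c x k / pr k)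
    (f : ℝ → ℝ) (hf : ConvexOn ℝ (Set.Ici 0) f) (hf1 : f 1 = 0)
    (L : ℝ) (hL : Filter.Tendsto (fun t => f t / t) Filter.atTop (nhds L))
    (hfL : 0 < f 0 + L)
    (D : (X → ℝ) → (X → ℝ) → ℝ)
    (hD : ∀ r s, D r s =
      ∑ x ∈ Finset.univ.filter (fun x => 0 < s x), s x * f (r x / s x)
        + L * ∑ x ∈ Finset.univ.filter (fun x => s x = 0), r x)
    (heq : ∑ a, ∑ b, pr a * pr b * D (q a) (q b)
        = (f 0 + L) * ∑ k, pr k * (1 - pr k)) :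
    ∀ a b, a ≠ b → ∀ x, c x a * c x b = 0 := by
  classical
  intro a₀ b₀ hab x₀
  by_contra hne
  have hqs : ∀ k, ∑ x, q k x = 1 := by
    intro k
    simp only [hq]
    rw [← Finset.sum_div, ← hpr, div_self (hprpos k).ne']
  have hq0 : ∀ k x, 0 ≤ q k x := fun k x => by
    rw [hq]; exact div_nonneg (mul_nonneg (hp x).le (hc x k)) (hprpos k).le
  have hprs : ∑ k, pr k = 1 := by
    simp only [hpr]
    rw [Finset.sum_comm]
    simp only [← Finset.mul_sum, hc1, mul_one, hp1]
  have hD' : ∀ a b, D (q a) (q b) =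
      ∑ x, (if 0 < q b x then q b x * f (q a x / q b x) else L * q a x) := by
    intro a b
    rw [hD, Finset.sum_ite, Finset.mul_sum]
    congr 1
    refine Finset.sum_congr ?_ (fun _ _ => rfl)
    ext x
    simp only [Finset.mem_filter, Finset.mem_univ, true_and, not_lt]
    exact ⟨fun h => h.le, fun h => le_antisymm h (hq0 b x)⟩
  have hM : ∀ a b, ∑ x, (f 0 * q b x + L * q a x) = f 0 + L := by
    intro a b
    rw [Finset.sum_add_distrib, ← Finset.mul_sum, ← Finset.mul_sum, hqs, hqs]; ring
  have hpt : ∀ a b x, (if 0 < q b x then q b x * f (q a x / q b x) else L * q a x)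
      ≤ f 0 * q b x + L * q a x := by
    intro a b x
    split_ifs with h
    · have := mul_le_mul_of_nonneg_left
        (fdiv_le_aux f hf L hL (q a x / q b x) (div_nonneg (hq0 a x) h.le)) h.le
      have e : q b x * (f 0 + L * (q a x / q b x)) = f 0 * q b x + L * q a x := by
        field_simp
      linarith
    · have : q b x = 0 := le_antisymm (not_lt.mp h) (hq0 b x)
      simp [this]
  have hle : ∀ a b, D (q a) (q b) ≤ f 0 + L := by
    intro a b
    rw [hD', ← hM a b]
    exact Finset.sum_le_sum fun x _ => hpt a b x
  have hpos : ∀ k, c x₀ k ≠ 0 → 0 < q k x₀ := by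
    intro k hk
    rw [hq]
    exact div_pos (mul_pos (hp x₀) (lt_of_le_of_ne (hc x₀ k) (Ne.symm hk))) (hprpos k)
  have ha := hpos a₀ (left_ne_zero_of_mul hne)
  have hb := hpos b₀ (right_ne_zero_of_mul hne)
  have hlt : D (q a₀) (q b₀) < f 0 + L := by
    rw [hD', ← hM a₀ b₀]
    refine Finset.sum_lt_sum (fun x _ => hpt a₀ b₀ x) ⟨x₀, Finset.mem_univ _, ?_⟩
    rw [if_pos hb]
    have := mul_lt_mul_of_pos_left
      (fdiv_lt_aux f hf hf1 L hL hfL (q a₀ x₀ / q b₀ x₀) (div_pos ha hb)) hb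
    have e : q b₀ x₀ * (f 0 + L * (q a₀ x₀ / q b₀ x₀)) = f 0 * q b₀ x₀ + L * q a₀ x₀ := by
      field_simp
    linarith
  have hdiag : ∀ a, D (q a) (q a) = 0 := by
    intro a
    rw [hD']
    refine Finset.sum_eq_zero fun x _ => ?_
    split_ifs with h
    · rw [div_self h.ne', hf1, mul_zero]
    · rw [le_antisymm (not_lt.mp h) (hq0 a x), mul_zero]
  have hR : (f 0 + L) * ∑ k, pr k * (1 - pr k)
      = ∑ a, ∑ b, pr a * pr b * (if a = b then 0 else f 0 + L) := by
    rw [Finset.mul_sum]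
    refine Finset.sum_congr rfl fun a _ => ?_
    have e : ∀ b, pr a * pr b * (if a = b then 0 else f 0 + L)
        = pr a * (f 0 + L) * pr b - (if a = b then pr a * (f 0 + L) * pr b else 0) := by
      intro b; split_ifs <;> ring
    simp only [e]
    rw [Finset.sum_sub_distrib, ← Finset.mul_sum, hprs, Finset.sum_ite_eq]
    simp only [Finset.mem_univ, if_true]
    ring
  have hterm : ∀ a b, pr a * pr b * D (q a) (q b)
      ≤ pr a * pr b * (if a = b then 0 else f 0 + L) := by
    intro a b
    refine mul_le_mul_of_nonneg_left ?_ (mul_pos (hprpos a) (hprpos b)).le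
    split_ifs with h
    · subst h; exact (hdiag a).le
    · exact hle a b
  have hcon : ∑ a, ∑ b, pr a * pr b * D (q a) (q b)
      < ∑ a, ∑ b, pr a * pr b * (if a = b then 0 else f 0 + L) := by
    refine Finset.sum_lt_sum (fun a _ => Finset.sum_le_sum fun b _ => hterm a b)
      ⟨a₀, Finset.mem_univ _, ?_⟩
    refine Finset.sum_lt_sum (fun b _ => hterm a₀ b) ⟨b₀, Finset.mem_univ _, ?_⟩
    rw [if_neg hab]
    exact mul_lt_mul_of_pos_left hlt (mul_pos (hprpos a₀) (hprpos b₀))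
  rw [heq, hR] at hcon
  exact lt_irrefl _ hcon
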